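/- arXiv:1907.05999 — 2 statements merged into one kernel-verified Lean document; each statement's English description precedes it below -/
import Mathlib

section
/- Let L₁ be a vertex lattice of type 1 in C, i.e. pL₁^∨ ⊂² L₁ ⊂² L₁^∨. Then there exist a vertex lattice L₀ of type 0 (L₀ = L₀^∨) with L₁ ⊆ L₀, and a vertex lattice L₂ of type 2 (L₂ = pL₂^∨) with L₂ ⊆ L₁. -/
open Pointwise

noncomputable section

variable (p : ℕ) [Fact p.Prime]
variable (C : Type) [AddCommGroup C] [Module ℚ_[p] C]
  [Module ℤ_[p] C] [IsScalarTower ℤ_[p] ℚ_[p] C]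
variable (ω : LinearMap.BilinForm ℚ_[p] C)

/-- The dual lattice of a `ℤ_p`-submodule of `C` with respect to `ω`. -/
def dualL (L : Submodule ℤ_[p] C) : Submodule ℤ_[p] C where
  carrier := {x | ∀ l ∈ L, ω x l ∈ (algebraMap ℤ_[p] ℚ_[p]).range}
  zero_mem' := by
    intro l hl
    exact ⟨0, by simp⟩
  add_mem' := by
    intro x y hx hy l hl
    rw [map_add, LinearMap.add_apply]
    exact add_mem (hx l hl) (hy l hl)
  smul_mem' := by
    intro c x hx l hl
    rw [← algebraMap_smul ℚ_[p] c x, map_smul, LinearMap.smul_apply, smul_eq_mul]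
    exact mul_mem ⟨c, rfl⟩ (hx l hl)

/-- `L` is a lattice in `C`: finitely generated over `ℤ_p` and spanning `C`
over `ℚ_p`. -/
def IsLattice (L : Submodule ℤ_[p] C) : Prop :=
  L.FG ∧ Submodule.span ℚ_[p] (L : Set C) = ⊤

/-- The length of the `ℤ_p`-module `B / A` (as the Krull dimension of its submodule
lattice). -/
def relLength (A B : Submodule ℤ_[p] C) : WithBot ℕ∞ :=
  Order.krullDim (Submodule ℤ_[p] (B ⧸ (A.comap B.subtype)))

/-- `A ⊂ᵈ B` : `A ⊆ B` with colength `d`. -/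
def SubD (d : ℕ) (A B : Submodule ℤ_[p] C) : Prop :=
  A ≤ B ∧ relLength p C A B = (d : WithBot ℕ∞)

lemma int_swap {B : LinearMap.BilinForm ℚ_[p] C} (hB : B.IsAlt) {x y : C}
    (h : B x y ∈ (algebraMap ℤ_[p] ℚ_[p]).range) :
    B y x ∈ (algebraMap ℤ_[p] ℚ_[p]).range := by
  rw [← hB.neg_eq]
  exact neg_mem h

lemma dual_anti (B : LinearMap.BilinForm ℚ_[p] C) {M N : Submodule ℤ_[p] C} (h : M ≤ N) :
    dualL p C B N ≤ dualL p C B M :=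
  fun _ hx l hl => hx l (h hl)

lemma le_dual_dual {B : LinearMap.BilinForm ℚ_[p] C} (hB : B.IsAlt) (M : Submodule ℤ_[p] C) :
    M ≤ dualL p C B (dualL p C B M) :=
  fun x hx _ hl => int_swap p C hB (hl x hx)

lemma p_ne : (p : ℚ_[p]) ≠ 0 := by
  exact_mod_cast (Fact.out : p.Prime).ne_zero

lemma zsmul_eq (x : C) : (p : ℤ_[p]) • x = (p : ℚ_[p]) • x := by
  rw [← algebraMap_smul ℚ_[p] (p : ℤ_[p]) x]
  simp

lemma fg_of_smul_le {M L : Submodule ℤ_[p] C} (hM : M.FG) (h : (p : ℤ_[p]) • L ≤ M) : L.FG := by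
  have hn : IsNoetherian ℤ_[p] M := isNoetherian_of_fg_of_noetherian M hM
  have h2 : ((p : ℤ_[p]) • L).FG := isNoetherian_submodule.mp hn _ h
  refine Submodule.fg_of_fg_map_injective (LinearMap.lsmul ℤ_[p] C (p : ℤ_[p])) ?_ ?_
  · intro x y hxy
    simp only [LinearMap.lsmul_apply, zsmul_eq] at hxy
    exact smul_right_injective C (p_ne p) hxy
  · exact h2

/-- A maximal integral overlattice is self-dual. -/
lemma exists_selfdual {B : LinearMap.BilinForm ℚ_[p] C} (hB : B.IsAlt)
    (M : Submodule ℤ_[p] C) (hM : IsLattice p C M) (h1 : M ≤ dualL p C B M)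
    (h2 : (p : ℤ_[p]) • dualL p C B M ≤ M) :
    ∃ L : Submodule ℤ_[p] C, IsLattice p C L ∧ L = dualL p C B L ∧ M ≤ L := by
  obtain ⟨L, hML, hL⟩ := zorn_le_nonempty₀ {L : Submodule ℤ_[p] C | L ≤ dualL p C B L} (by
    intro c hc hch y hy
    refine ⟨sSup c, ?_, fun z hz => le_sSup hz⟩
    intro x hx l hl
    rw [Submodule.mem_sSup_of_directed ⟨y, hy⟩ hch.directedOn] at hx hl
    obtain ⟨s, hs, hxs⟩ := hx
    obtain ⟨t, ht, hlt⟩ := hl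
    rcases hch.total hs ht with h | h
    · exact hc ht (h hxs) l hlt
    · exact hc hs hxs l (h hlt)) M h1
  have hLd : L ≤ dualL p C B L := hL.1
  refine ⟨L, ⟨?_, ?_⟩, le_antisymm hLd ?_, hML⟩
  · refine fg_of_smul_le p C hM.1 (le_trans ?_ h2)
    exact Submodule.map_mono (hLd.trans (dual_anti p C B hML))
  · rw [eq_top_iff, ← hM.2]
    exact Submodule.span_mono hML
  · intro y hy
    have key : L ⊔ Submodule.span ℤ_[p] {y} ≤ dualL p C B (L ⊔ Submodule.span ℤ_[p] {y}) := by
      have hy' : ∀ z ∈ L ⊔ Submodule.span ℤ_[p] {y}, z ∈ dualL p C B L := by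
        intro z hz
        refine (sup_le hLd ?_ : L ⊔ Submodule.span ℤ_[p] {y} ≤ _) hz
        simpa [Submodule.span_le] using hy
      have hy2 : L ⊔ Submodule.span ℤ_[p] {y} ≤ dualL p C B (Submodule.span ℤ_[p] {y}) := by
        refine sup_le ?_ ?_
        · intro l hl
          have : Submodule.span ℤ_[p] {y} ≤ dualL p C B L := by
            simpa [Submodule.span_le] using hy
          intro z hz
          exact int_swap p C hB (this hz l hl)
        · intro a ha b hb
          obtain ⟨a, rfl⟩ := Submodule.mem_span_singleton.mp ha
          obtain ⟨b, rfl⟩ := Submodule.mem_span_singleton.mp hb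
          rw [← algebraMap_smul ℚ_[p] a y, ← algebraMap_smul ℚ_[p] b y]
          simp only [map_smul, LinearMap.smul_apply, hB.self_eq_zero y, smul_zero]
          exact zero_mem _
      intro x hx l hl
      obtain ⟨a, ha, b, hb, rfl⟩ := Submodule.mem_sup.mp hl
      rw [map_add]
      exact add_mem (hy' x hx a ha) (hy2 hx b hb)
    exact hL.2 key le_sup_left (Submodule.mem_sup_right (Submodule.mem_span_singleton_self y))

lemma dual_dual {B : LinearMap.BilinForm ℚ_[p] C} (hB : B.IsAlt) (hnd : B.Nondegenerate)
    (M : Submodule ℤ_[p] C) (hM : IsLattice p C M) :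
    dualL p C B (dualL p C B M) ≤ M := by
  have : Submodule.IsLattice ℚ_[p] M := ⟨hM.1, hM.2⟩
  have hfree : Module.Free ℤ_[p] M := Submodule.IsLattice.free ℚ_[p] M
  let b := Module.Free.chooseBasis ℤ_[p] M
  have hspan : Submodule.span ℤ_[p] (Set.range (b.extendOfIsLattice ℚ_[p])) = M := by
    have : Set.range (b.extendOfIsLattice ℚ_[p]) = M.subtype '' Set.range b := by
      rw [← Set.range_comp]
      congr 1
      ext k
      simp
    rw [this, ← Submodule.map_span, b.span_eq, Submodule.map_top, Submodule.range_subtype]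
  have h := LinearMap.BilinForm.dualSubmodule_dualSubmodule_flip_of_basis (R := ℤ_[p]) B hnd
    (b.extendOfIsLattice ℚ_[p])
  rw [hspan] at h
  intro x hx
  rw [← h]
  intro y hy
  have hyd : y ∈ dualL p C B M := by
    intro l hl
    obtain ⟨c, hc⟩ := Submodule.mem_one.mp (hy l hl)
    exact int_swap p C hB ⟨c, hc⟩
  obtain ⟨c, hc⟩ := hx y hyd
  exact Submodule.mem_one.mpr ⟨c, hc⟩

lemma dual_scaled (B : LinearMap.BilinForm ℚ_[p] C) (M : Submodule ℤ_[p] C) :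
    dualL p C ((p : ℚ_[p])⁻¹ • B) M = (p : ℤ_[p]) • dualL p C B M := by
  have hp := p_ne p
  ext x
  rw [Submodule.mem_smul_pointwise_iff_exists]
  constructor
  · intro hx
    refine ⟨(p : ℚ_[p])⁻¹ • x, fun l hl => ?_, ?_⟩
    · simpa using hx l hl
    · rw [zsmul_eq, smul_smul, mul_inv_cancel₀ hp, one_smul]
  · rintro ⟨y, hy, rfl⟩ l hl
    have := hy l hl
    rw [zsmul_eq]
    simpa [hp] using this

lemma smul_dual_smul (B : LinearMap.BilinForm ℚ_[p] C) (M : Submodule ℤ_[p] C) :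
    dualL p C ((p : ℚ_[p])⁻¹ • B) ((p : ℤ_[p]) • M) = dualL p C B M := by
  have hp := p_ne p
  ext x
  constructor
  · intro hx l hl
    have := hx ((p : ℤ_[p]) • l) (Submodule.smul_mem_pointwise_smul _ _ _ hl)
    rw [zsmul_eq] at this
    simpa [hp] using this
  · intro hx l hl
    rw [Submodule.mem_smul_pointwise_iff_exists] at hl
    obtain ⟨y, hy, rfl⟩ := hl
    rw [zsmul_eq]
    simpa [hp] using hx y hy

/-- Let `L₁` be a vertex lattice of type 1 in `C`, i.e.
`pL₁^∨ ⊂² L₁ ⊂² L₁^∨`. Then there exist a vertex lattice `L₀` of type 0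
(`L₀ = L₀^∨`) with `L₁ ⊆ L₀`, and a vertex lattice `L₂` of type 2 (`L₂ = pL₂^∨`)
with `L₂ ⊆ L₁`. -/
theorem type1_between_type0_and_type2
    (halt : ω.IsAlt) (hnd : ω.Nondegenerate)
    (hdim : Module.finrank ℚ_[p] C = 4)
    (L₁ : Submodule ℤ_[p] C) (hlat : IsLattice p C L₁)
    (h1 : SubD p C 2 ((p : ℤ_[p]) • dualL p C ω L₁) L₁)
    (h2 : SubD p C 2 L₁ (dualL p C ω L₁)) :
    (∃ L₀ : Submodule ℤ_[p] C, IsLattice p C L₀ ∧ L₀ = dualL p C ω L₀ ∧ L₁ ≤ L₀) ∧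
    (∃ L₂ : Submodule ℤ_[p] C, IsLattice p C L₂ ∧
      L₂ = (p : ℤ_[p]) • dualL p C ω L₂ ∧ L₂ ≤ L₁) := by
  obtain ⟨h1, -⟩ := h1
  obtain ⟨h2, -⟩ := h2
  refine ⟨exists_selfdual p C halt L₁ hlat h2 h1, ?_⟩
  have halt' : ((p : ℚ_[p])⁻¹ • ω).IsAlt := fun x => by
    simp [halt.self_eq_zero x]
  have hdd := dual_dual p C halt hnd L₁ hlat
  have hfg : ((p : ℤ_[p]) • dualL p C ω L₁).FG :=
    isNoetherian_submodule.mp (isNoetherian_of_fg_of_noetherian L₁ hlat.1) _ h1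
  have hsp : Submodule.span ℚ_[p] (((p : ℤ_[p]) • dualL p C ω L₁ : Submodule ℤ_[p] C) : Set C)
      = ⊤ := by
    rw [eq_top_iff, ← hlat.2, Submodule.span_le]
    intro x hx
    have : x = (p : ℚ_[p])⁻¹ • ((p : ℤ_[p]) • x) := by
      rw [zsmul_eq, smul_smul, inv_mul_cancel₀ (p_ne p), one_smul]
    rw [this]
    exact Submodule.smul_mem _ _
      (Submodule.subset_span (Submodule.smul_mem_pointwise_smul _ _ _ (h2 hx)))
  obtain ⟨L, hL, hLd, hle⟩ := exists_selfdual p C halt' ((p : ℤ_[p]) • dualL p C ω L₁)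
    ⟨hfg, hsp⟩ (by
      rw [smul_dual_smul]
      exact h1.trans (le_dual_dual p C halt L₁)) (by
      rw [smul_dual_smul]
      exact Submodule.map_mono (dual_anti p C ω h2))
  refine ⟨L, hL, hLd.trans (dual_scaled p C ω L), ?_⟩
  have := dual_anti p C ((p : ℚ_[p])⁻¹ • ω) hle
  rw [← hLd, smul_dual_smul] at this
  exact this.trans hdd

end
end

section
/- Let x ∈ V be a nonzero vector with ω(x, σx) = 0 and σx ∉ 𝔽x. Then the plane spanned by x and σx is σ-stable if and only if ω(x, σ²x) = 0. -/
noncomputable section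

variable (p : ℕ) [Fact p.Prime]
variable (𝔽 : Type) [Field 𝔽] [IsAlgClosed 𝔽] [CharP 𝔽 p]

/-- The symplectic form on `V = 𝔽⁴` (base changed from the standard form over `𝔽_p`). -/
def omegaF (x y : Fin 4 → 𝔽) : 𝔽 :=
  x 0 * y 3 - x 3 * y 0 + x 1 * y 2 - x 2 * y 1

/-- The `p`-semilinear Frobenius `σ` on `V = V₀ ⊗ 𝔽 = 𝔽⁴` (acting as `c ↦ c^p`
on the coordinates with respect to the fixed `𝔽_p`-rational basis). -/
def frobV (x : Fin 4 → 𝔽) : Fin 4 → 𝔽 := fun i => (x i) ^ p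

/-- The orthogonal complement `U^⊥` with respect to `ω`. -/
def perp (U : Submodule 𝔽 (Fin 4 → 𝔽)) : Submodule 𝔽 (Fin 4 → 𝔽) where
  carrier := {x | ∀ u ∈ U, omegaF 𝔽 x u = 0}
  zero_mem' := by
    intro u hu
    simp [omegaF]
  add_mem' := by
    intro x y hx hy u hu
    have h : omegaF 𝔽 (x + y) u = omegaF 𝔽 x u + omegaF 𝔽 y u := by
      simp [omegaF]; ring
    rw [h, hx u hu, hy u hu, add_zero]
  smul_mem' := by
    intro c x hx u hu
    have h : omegaF 𝔽 (c • x) u = c * omegaF 𝔽 x u := by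
      simp [omegaF]; ring
    rw [h, hx u hu, mul_zero]

/-- The image `σU` of a subspace `U` under the Frobenius `σ` (an `𝔽`-subspace since
`𝔽` is perfect). -/
def sigL (U : Submodule 𝔽 (Fin 4 → 𝔽)) : Submodule 𝔽 (Fin 4 → 𝔽) :=
  Submodule.span 𝔽 (frobV p 𝔽 '' U)

theorem aux_minors {𝔽 : Type} [Field 𝔽] (x y z : Fin 4 → 𝔽)
    (hxy : omegaF 𝔽 x y = 0) (hxz : omegaF 𝔽 x z = 0) (hyz : omegaF 𝔽 y z = 0)
    (i j k : Fin 4) :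
    (x i * y j - x j * y i) * z k =
      (z i * y j - z j * y i) * x k + (x i * z j - x j * z i) * y k := by
  unfold omegaF at hxy hxz hyz
  have a0 : (x 0 * y 1 - x 1 * y 0) * z 2 =
      (z 0 * y 1 - z 1 * y 0) * x 2 + (x 0 * z 1 - x 1 * z 0) * y 2 := by
    linear_combination z 0 * hxy - y 0 * hxz + x 0 * hyz
  have a1 : (x 0 * y 1 - x 1 * y 0) * z 3 =
      (z 0 * y 1 - z 1 * y 0) * x 3 + (x 0 * z 1 - x 1 * z 0) * y 3 := by
    linear_combination -(z 1 * hxy - y 1 * hxz + x 1 * hyz)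
  have a2 : (x 0 * y 2 - x 2 * y 0) * z 3 =
      (z 0 * y 2 - z 2 * y 0) * x 3 + (x 0 * z 2 - x 2 * z 0) * y 3 := by
    linear_combination -(z 2 * hxy - y 2 * hxz + x 2 * hyz)
  have a3 : (x 1 * y 2 - x 2 * y 1) * z 3 =
      (z 1 * y 2 - z 2 * y 1) * x 3 + (x 1 * z 2 - x 2 * z 1) * y 3 := by
    linear_combination (z 3 * hxy - y 3 * hxz + x 3 * hyz)
  clear hxy hxz hyz
  fin_cases i <;> fin_cases j <;> fin_cases k <;>
    simp only [Fin.zero_eta, Fin.mk_one, Fin.reduceFinMk] <;>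
    first
      | ring1
      | linear_combination a0
      | linear_combination -a0
      | linear_combination a1
      | linear_combination -a1
      | linear_combination a2
      | linear_combination -a2
      | linear_combination a3
      | linear_combination -a3

theorem aux_mem {𝔽 : Type} [Field 𝔽] (x y z : Fin 4 → 𝔽) (hx : x ≠ 0)
    (h2 : y ∉ Submodule.span 𝔽 ({x} : Set (Fin 4 → 𝔽)))
    (hxy : omegaF 𝔽 x y = 0) (hxz : omegaF 𝔽 x z = 0) (hyz : omegaF 𝔽 y z = 0) :
    ∃ a b : 𝔽, a • x + b • y = z := by
  obtain ⟨i, hi⟩ : ∃ i, x i ≠ 0 := by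
    by_contra! h
    exact hx (funext h)
  obtain ⟨j, hj⟩ : ∃ j, x i * y j - x j * y i ≠ 0 := by
    by_contra! h
    apply h2
    rw [Submodule.mem_span_singleton]
    refine ⟨y i / x i, funext fun j => ?_⟩
    have := h j
    simp only [Pi.smul_apply, smul_eq_mul]
    field_simp
    linear_combination -this
  refine ⟨(z i * y j - z j * y i) / (x i * y j - x j * y i),
    (x i * z j - x j * z i) / (x i * y j - x j * y i), funext fun k => ?_⟩
  have := aux_minors x y z hxy hxz hyz i j k
  simp only [Pi.smul_apply, Pi.add_apply, smul_eq_mul]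
  rw [div_mul_eq_mul_div, div_mul_eq_mul_div, ← add_div, ← this, mul_div_cancel_left₀ _ hj]

theorem aux_frob_comb (p : ℕ) [Fact p.Prime] (𝔽 : Type) [Field 𝔽] [CharP 𝔽 p]
    (a b : 𝔽) (x y : Fin 4 → 𝔽) :
    frobV p 𝔽 (a • x + b • y) = a ^ p • frobV p 𝔽 x + b ^ p • frobV p 𝔽 y := by
  funext i
  simp [frobV, add_pow_char, mul_pow]

theorem aux_omega_frob (p : ℕ) [Fact p.Prime] (𝔽 : Type) [Field 𝔽] [CharP 𝔽 p]
    (x y : Fin 4 → 𝔽) :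
    omegaF 𝔽 (frobV p 𝔽 x) (frobV p 𝔽 y) = omegaF 𝔽 x y ^ p := by
  simp [omegaF, frobV, add_pow_char, sub_pow_char, mul_pow]

theorem aux_sigL (p : ℕ) [Fact p.Prime] (𝔽 : Type) [Field 𝔽] [CharP 𝔽 p]
    (x y : Fin 4 → 𝔽) :
    sigL p 𝔽 (Submodule.span 𝔽 ({x, y} : Set (Fin 4 → 𝔽))) =
      Submodule.span 𝔽 ({frobV p 𝔽 x, frobV p 𝔽 y} : Set (Fin 4 → 𝔽)) := by
  unfold sigL
  apply le_antisymm
  · rw [Submodule.span_le]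
    rintro _ ⟨u, hu, rfl⟩
    obtain ⟨a, b, rfl⟩ := Submodule.mem_span_pair.1 hu
    rw [aux_frob_comb]
    exact Submodule.mem_span_pair.2 ⟨_, _, rfl⟩
  · apply Submodule.span_mono
    rintro u (rfl | rfl)
    · exact ⟨x, Submodule.subset_span (by simp), rfl⟩
    · exact ⟨y, Submodule.subset_span (by simp), rfl⟩

/-- Let `x ∈ V` be a nonzero vector with `ω(x, σx) = 0` and
`σx ∉ 𝔽x`. Then the plane spanned by `x` and `σx` is `σ`-stable if and only if
`ω(x, σ²x) = 0`. -/
theorem plane_sigma_stable_iff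
    (p : ℕ) [Fact p.Prime]
    (𝔽 : Type) [Field 𝔽] [IsAlgClosed 𝔽] [CharP 𝔽 p]
    (x : Fin 4 → 𝔽) (hx : x ≠ 0)
    (h1 : omegaF 𝔽 x (frobV p 𝔽 x) = 0)
    (h2 : frobV p 𝔽 x ∉ Submodule.span 𝔽 ({x} : Set (Fin 4 → 𝔽))) :
    sigL p 𝔽 (Submodule.span 𝔽 ({x, frobV p 𝔽 x} : Set (Fin 4 → 𝔽))) =
        Submodule.span 𝔽 ({x, frobV p 𝔽 x} : Set (Fin 4 → 𝔽)) ↔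
      omegaF 𝔽 x (frobV p 𝔽 (frobV p 𝔽 x)) = 0 := by
  rw [aux_sigL]
  constructor
  · intro h
    have hz : frobV p 𝔽 (frobV p 𝔽 x) ∈
        Submodule.span 𝔽 ({x, frobV p 𝔽 x} : Set (Fin 4 → 𝔽)) := by
      rw [← h]
      exact Submodule.subset_span (by simp)
    obtain ⟨a, b, hab⟩ := Submodule.mem_span_pair.1 hz
    rw [← hab]
    generalize frobV p 𝔽 x = y at *
    simp only [omegaF, Pi.add_apply, Pi.smul_apply, smul_eq_mul] at h1 ⊢
    linear_combination b * h1
  · intro h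
    have hyz : omegaF 𝔽 (frobV p 𝔽 x) (frobV p 𝔽 (frobV p 𝔽 x)) = 0 := by
      rw [aux_omega_frob, h1, zero_pow (Fact.out : p.Prime).ne_zero]
    obtain ⟨a, b, hab⟩ := aux_mem x _ _ hx h2 h1 h hyz
    have ha : a ≠ 0 := by
      rintro rfl
      obtain ⟨c, hc⟩ := IsAlgClosed.exists_pow_nat_eq b (Fact.out : p.Prime).pos
      apply h2
      rw [Submodule.mem_span_singleton]
      refine ⟨c, funext fun i => ?_⟩
      have hi := congrFun hab i
      apply frobenius_inj 𝔽 p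
      simp only [frobenius_def, Pi.smul_apply, smul_eq_mul, mul_pow, hc]
      simpa [frobV] using hi
    apply le_antisymm
    · rw [Submodule.span_le]
      rintro u (rfl | rfl)
      · exact Submodule.subset_span (by simp)
      · exact Submodule.mem_span_pair.2 ⟨a, b, hab⟩
    · rw [Submodule.span_le]
      rintro u (rfl | rfl)
      · refine Submodule.mem_span_pair.2 ⟨-(a⁻¹ * b), a⁻¹, ?_⟩
        rw [← hab, smul_add, smul_smul, smul_smul, inv_mul_cancel₀ ha, one_smul, neg_smul]
        abel
      · exact Submodule.subset_span (by simp)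

end
end
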